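/- arXiv:1912.01823 — 2 statements merged into one kernel-verified Lean document; each statement's English description precedes it below -/
import Mathlib

section
/- Let (Ω, P) be a probability space, C > 0, δ ≥ 0, β₂ ∈ (0,1), ε ≥ 0, and p = (1+δ)/(C+1) ∈ [0,1]. Let W : Ω → [0,1] and V : Ω → [0,∞) be random variables with E[V] ≤ (1+δ)·C², and let B : Ω → {0,1} be Bernoulli(p), independent of the pair (W, V). Define the stochastic gradient g = C·W on {B=1} and g = −1 on {B=0}. Then E[−g/(√(β₂·V + (1−β₂)·g²) + ε)] ≥ −p/√(1−β₂) + (1−p)/(√(β₂·(1+δ)·C² + (1−β₂)) + ε). -/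
open MeasureTheory ProbabilityTheory

/-! Condition on which sample is drawn. A rare sample moves the iterate by at most `1 / √(1 - β₂)`,
because the denominator of the step already contains `√(1 - β₂) * |g|`. On a common sample `g = -1`,
so the step is a convex decreasing function of `V` alone, the reciprocal of the concave function
`√(β₂ * V + (1 - β₂)) + ε`. By independence its mean over the common samples is its mean over
all of `Ω`, and Jensen's inequality bounds that below by the value at any upper bound of `E[V]`. -/

/-- The displacement per unit learning rate of one step of Adam with `β₁ = 0`, where `v` is the
second-moment accumulator before the step and `x` the stochastic gradient. For `ε = v = x = 0` the
quotient is `0 / 0 = 0`, so the iterate stays in place. -/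
noncomputable def adamStep (β ε v x : ℝ) : ℝ :=
  -x / (√(β * v + (1 - β) * x ^ 2) + ε)

section Deterministic

variable {β b ε v x : ℝ}

lemma abs_adamStep_le (hβ : β ∈ Set.Ico 0 1) (hε : 0 ≤ ε) (hv : 0 ≤ v) :
    |adamStep β ε v x| ≤ 1 / √(1 - β) := by
  have hβ' : 0 < 1 - β := sub_pos.2 hβ.2
  have hden : √(1 - β) * |x| ≤ √(β * v + (1 - β) * x ^ 2) + ε :=
    calc √(1 - β) * |x| = √((1 - β) * x ^ 2) := by
          rw [Real.sqrt_mul hβ'.le, Real.sqrt_sq_eq_abs]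
      _ ≤ √(β * v + (1 - β) * x ^ 2) :=
          Real.sqrt_le_sqrt (le_add_of_nonneg_left (mul_nonneg hβ.1 hv))
      _ ≤ √(β * v + (1 - β) * x ^ 2) + ε := le_add_of_nonneg_right hε
  have hden_nonneg : 0 ≤ √(β * v + (1 - β) * x ^ 2) + ε := by positivity
  rw [adamStep, abs_div, abs_neg, abs_of_nonneg hden_nonneg]
  refine div_le_of_le_mul₀ hden_nonneg (by positivity) ?_
  rwa [one_div, inv_mul_eq_div, le_div_iff₀' (Real.sqrt_pos.2 hβ')]

lemma adamStep_neg_one : adamStep β ε v (-1) = (√(β * v + (1 - β)) + ε)⁻¹ := by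
  simp [adamStep]

lemma convexOn_inv_of_concaveOn {E : Type*} [AddCommMonoid E] [Module ℝ E] {s : Set E}
    {f : E → ℝ} (hf : ConcaveOn ℝ s f) (hpos : ∀ y ∈ s, 0 < f y) :
    ConvexOn ℝ s fun y ↦ (f y)⁻¹ := by
  refine ⟨hf.1, fun y hy z hz c d hc hd hcd ↦ ?_⟩
  have hinv : ConvexOn ℝ (Set.Ioi 0) fun t : ℝ ↦ t⁻¹ := by
    simpa only [zpow_neg_one] using convexOn_zpow (𝕜 := ℝ) (-1)
  calc (f (c • y + d • z))⁻¹ ≤ (c • f y + d • f z)⁻¹ :=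
        inv_anti₀ (hinv.1 (hpos y hy) (hpos z hz) hc hd hcd) (hf.2 hy hz hc hd hcd)
    _ ≤ c • (f y)⁻¹ + d • (f z)⁻¹ := hinv.2 (hpos y hy) (hpos z hz) hc hd hcd

lemma concaveOn_sqrt_mul_add_add (hβ : 0 ≤ β) (hb : 0 ≤ b) :
    ConcaveOn ℝ (Set.Ici 0) fun v ↦ √(β * v + b) + ε := by
  have hsqrt := Real.strictConcaveOn_sqrt.concaveOn.comp_affineMap
    (β • AffineMap.id ℝ ℝ + AffineMap.const ℝ ℝ b)
  exact (hsqrt.subset (fun v hv ↦ add_nonneg (mul_nonneg hβ hv) hb) (convex_Ici 0)).add_const ε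

end Deterministic

section Expectation

variable {Ω : Type*} [MeasurableSpace Ω] {P : Measure Ω} {β b ε m : ℝ} {V g : Ω → ℝ}

lemma integrable_adamStep [IsFiniteMeasure P] (hβ : β ∈ Set.Ico 0 1) (hε : 0 ≤ ε)
    (hVnn : ∀ᵐ ω ∂P, 0 ≤ V ω) (hV : AEMeasurable V P) (hg : AEMeasurable g P) :
    Integrable (fun ω ↦ adamStep β ε (V ω) (g ω)) P := by
  refine .of_bound (AEMeasurable.aestronglyMeasurable ?_) (1 / √(1 - β)) ?_
  · unfold adamStep
    fun_prop
  · filter_upwards [hVnn] with ω hω using abs_adamStep_le hβ hε hω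

lemma inv_sqrt_le_integral_inv_sqrt [IsProbabilityMeasure P] (hβ : 0 ≤ β) (hb : 0 < b)
    (hε : 0 ≤ ε) (hVnn : ∀ᵐ ω ∂P, 0 ≤ V ω) (hVint : Integrable V P) (hVm : ∫ ω, V ω ∂P ≤ m) :
    (√(β * m + b) + ε)⁻¹ ≤ ∫ ω, (√(β * V ω + b) + ε)⁻¹ ∂P := by
  have hpos : ∀ v ∈ Set.Ici (0 : ℝ), 0 < √(β * v + b) + ε :=
    fun v (hv : 0 ≤ v) ↦ by positivity
  have hint : Integrable (fun ω ↦ (√(β * V ω + b) + ε)⁻¹) P := by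
    have := hVint.aemeasurable
    refine .of_mem_Icc 0 (√b + ε)⁻¹ (by fun_prop) ?_
    filter_upwards [hVnn] with ω hω
    refine ⟨(inv_pos.2 (hpos _ hω)).le, ?_⟩
    gcongr
    exact le_add_of_nonneg_left (mul_nonneg hβ hω)
  calc (√(β * m + b) + ε)⁻¹ ≤ (√(β * ∫ ω, V ω ∂P + b) + ε)⁻¹ := by
        have := hpos _ (integral_nonneg_of_ae hVnn)
        gcongr
    _ ≤ ∫ ω, (√(β * V ω + b) + ε)⁻¹ ∂P :=
        (convexOn_inv_of_concaveOn (concaveOn_sqrt_mul_add_add hβ hb.le) hpos).map_integral_le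
          (.inv₀ (by fun_prop) fun v hv ↦ (hpos v hv).ne') isClosed_Ici hVnn hVint hint

lemma neg_measureReal_div_le_setIntegral_adamStep [IsFiniteMeasure P] {A : Set Ω}
    (hβ : β ∈ Set.Ico 0 1) (hε : 0 ≤ ε) (hVnn : ∀ᵐ ω ∂P, 0 ≤ V ω) (hV : AEMeasurable V P)
    (hg : AEMeasurable g P) :
    -P.real A / √(1 - β) ≤ ∫ ω in A, adamStep β ε (V ω) (g ω) ∂P := by
  have hle : ∫ _ in A, -(1 / √(1 - β)) ∂P ≤ ∫ ω in A, adamStep β ε (V ω) (g ω) ∂P := by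
    refine setIntegral_mono_ae (integrable_const _).integrableOn
      (integrable_adamStep hβ hε hVnn hV hg).integrableOn ?_
    filter_upwards [hVnn] with ω hω using neg_le_of_abs_le (abs_adamStep_le hβ hε hω)
  calc -P.real A / √(1 - β) = ∫ _ in A, -(1 / √(1 - β)) ∂P := by
        rw [setIntegral_const, smul_eq_mul]; ring
    _ ≤ _ := hle

lemma measureReal_div_le_setIntegral_adamStep [IsProbabilityMeasure P] {ι : Type*}
    [MeasurableSpace ι] {B : Ω → ι} {s : Set ι} (hβ : β ∈ Set.Ico 0 1) (hε : 0 ≤ ε)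
    (hVnn : ∀ᵐ ω ∂P, 0 ≤ V ω) (hVint : Integrable V P) (hVm : ∫ ω, V ω ∂P ≤ m)
    (hB : Measurable B) (hs : MeasurableSet s) (hindep : IndepFun B V P)
    (hg : ∀ ω ∈ B ⁻¹' s, g ω = -1) :
    P.real (B ⁻¹' s) / (√(β * m + (1 - β)) + ε) ≤
      ∫ ω in B ⁻¹' s, adamStep β ε (V ω) (g ω) ∂P := by
  calc P.real (B ⁻¹' s) / (√(β * m + (1 - β)) + ε)
      ≤ P.real (B ⁻¹' s) * ∫ ω, (√(β * V ω + (1 - β)) + ε)⁻¹ ∂P :=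
        mul_le_mul_of_nonneg_left
          (inv_sqrt_le_integral_inv_sqrt hβ.1 (sub_pos.2 hβ.2) hε hVnn hVint hVm)
          measureReal_nonneg
    _ = ∫ ω in B ⁻¹' s, (√(β * V ω + (1 - β)) + ε)⁻¹ ∂P :=
        (Indep.setIntegral_eq_mul hB.comap_le hindep hVint.aemeasurable ⟨s, hs, rfl⟩
          (f := fun v ↦ (√(β * v + (1 - β)) + ε)⁻¹)
          (Measurable.aestronglyMeasurable (by fun_prop))).symm
    _ = ∫ ω in B ⁻¹' s, adamStep β ε (V ω) (g ω) ∂P :=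
        setIntegral_congr_fun (hB hs) fun ω hω ↦ by simp only [hg ω hω, adamStep_neg_one]

end Expectation

theorem adam_expected_drift_bound_general {Ω : Type*} [MeasurableSpace Ω] (P : Measure Ω)
    [IsProbabilityMeasure P] (β₂ ε p m : ℝ) (hβ₂ : β₂ ∈ Set.Ico (0 : ℝ) 1) (hε : 0 ≤ ε)
    (G V : Ω → ℝ) (hG : AEMeasurable G P) (hVnn : ∀ᵐ ω ∂P, 0 ≤ V ω) (hVint : Integrable V P)
    (hVmean : ∫ ω, V ω ∂P ≤ m) (B : Ω → Bool) (hBmeas : Measurable B)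
    (hB : P.real {ω | B ω = true} = p) (hindep : IndepFun B V P)
    (g : Ω → ℝ) (hg : ∀ ω, g ω = if B ω then G ω else -1) :
    -p / √(1 - β₂) + (1 - p) / (√(β₂ * m + (1 - β₂)) + ε) ≤
      ∫ ω, adamStep β₂ ε (V ω) (g ω) ∂P := by
  have hrare : MeasurableSet {ω | B ω = true} := hBmeas (measurableSet_singleton true)
  have hgmeas : AEMeasurable g P := by
    rw [funext hg]
    exact (hG.aestronglyMeasurable.restrict.piecewise hrare aestronglyMeasurable_const).aemeasurable
  have hcommon : {ω | B ω = true}ᶜ = B ⁻¹' {false} := by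
    ext ω
    simp
  have hPcommon : P.real (B ⁻¹' {false}) = 1 - p := by
    rw [← hcommon, probReal_compl_eq_one_sub hrare, hB]
  rw [← integral_add_compl hrare (integrable_adamStep hβ₂ hε hVnn hVint.aemeasurable hgmeas),
    hcommon, ← hPcommon, ← hB]
  exact add_le_add
    (neg_measureReal_div_le_setIntegral_adamStep hβ₂ hε hVnn hVint.aemeasurable hgmeas)
    (measureReal_div_le_setIntegral_adamStep hβ₂ hε hVnn hVint hVmean hBmeas
      (measurableSet_singleton false) hindep fun ω (hω : B ω = false) ↦ by simp [hg, hω])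

/-- Expected one-step drift bound at the heart of the proof of the
paper's Theorem 1: with `W : Ω → [0,1]` the current iterate, `V : Ω → [0,∞)` the
second-moment accumulator with `E[V] ≤ (1+δ)·C²`, `B` Bernoulli(`p`) independent of
`(W, V)` where `p = (1+δ)/(C+1)`, and stochastic gradient `g = C·W` on `{B=1}`,
`g = −1` on `{B=0}`,
`E[−g/(√(β₂·V + (1−β₂)·g²) + ε)] ≥ −p/√(1−β₂) + (1−p)/(√(β₂·(1+δ)·C² + (1−β₂)) + ε)`. -/
theorem adam_expected_drift_bound
    {Ω : Type*} [MeasurableSpace Ω] (P : Measure Ω) [IsProbabilityMeasure P]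
    (C δ β₂ ε p : ℝ) (hC : 0 < C) (hδ : 0 ≤ δ) (hβ₂ : β₂ ∈ Set.Ioo (0 : ℝ) 1)
    (hε : 0 ≤ ε) (hp : p = (1 + δ) / (C + 1)) (hp01 : p ∈ Set.Icc (0 : ℝ) 1)
    (W V : Ω → ℝ) (hWmeas : Measurable W) (hVmeas : Measurable V)
    (hW : ∀ ω, W ω ∈ Set.Icc (0 : ℝ) 1) (hVnn : ∀ ω, 0 ≤ V ω)
    (hVint : Integrable V P) (hVmean : (∫ ω, V ω ∂P) ≤ (1 + δ) * C ^ 2)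
    (B : Ω → Bool) (hBmeas : Measurable B)
    (hB : P {ω | B ω = true} = ENNReal.ofReal p)
    (hindep : IndepFun B (fun ω => (W ω, V ω)) P)
    (g : Ω → ℝ) (hg : ∀ ω, g ω = if B ω then C * W ω else -1) :
    -p / Real.sqrt (1 - β₂) +
        (1 - p) / (Real.sqrt (β₂ * (1 + δ) * C ^ 2 + (1 - β₂)) + ε) ≤
      ∫ ω, -g ω / (Real.sqrt (β₂ * V ω + (1 - β₂) * g ω ^ 2) + ε) ∂P := by
  rw [mul_assoc β₂]
  exact adam_expected_drift_bound_general P β₂ ε p _ ⟨hβ₂.1.le, hβ₂.2⟩ hε (fun ω ↦ C * W ω) V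
    (by fun_prop) (.of_forall hVnn) hVint hVmean B hBmeas
    (by rw [measureReal_def, hB, ENNReal.toReal_ofReal hp01.1])
    (hindep.comp measurable_id measurable_snd) g hg
end

section
/- For every β₂ ∈ [0,1), ε ≥ 0, and δ ≥ 0, there exists C₀ > 1 + δ such that for all C ≥ C₀, setting p = (1+δ)/(C+1), the following inequality holds: −p/√(1−β₂) + (1−p)/(√(β₂·(1+δ)·C + (1−β₂)) + ε) ≥ 0. -/
/-!
With `s = √(1 - β₂)` and `D = √(β₂ * (1 + δ) * C + (1 - β₂)) + ε`, clearing denominators turns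
positivity of the drift into `(1 + δ) * D < s * (C - δ)`. The left side grows like `√C` and the
right side like `C`, so the inequality holds for all large `C`.
-/

open Filter Asymptotics

theorem eventually_lt_const_mul_of_isLittleO {α : Type*} {l : Filter α} {f g : α → ℝ} {s : ℝ}
    (hfg : f =o[l] g) (hg : ∀ᶠ x in l, 0 < g x) (hs : 0 < s) :
    ∀ᶠ x in l, f x < s * g x := by
  filter_upwards [hfg.def (half_pos hs), hg] with x hx hgx
  calc f x ≤ ‖f x‖ := Real.le_norm_self _
    _ ≤ s / 2 * ‖g x‖ := hx
    _ = s / 2 * g x := by rw [Real.norm_of_nonneg hgx.le]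
    _ < s * g x := by gcongr; exact half_lt_self hs

theorem isLittleO_sqrt_id_atTop : Real.sqrt =o[atTop] (id : ℝ → ℝ) :=
  .of_tendsto_div_atTop <| by simpa only [id, Real.div_sqrt] using Real.tendsto_sqrt_atTop

theorem isLittleO_sqrt_of_isBigO {α : Type*} {l : Filter α} {f g : α → ℝ}
    (hfg : f =O[l] g) (hg : Tendsto g l atTop) : (fun x ↦ √(f x)) =o[l] g :=
  (hfg.sqrt (hg.eventually_ge_atTop 0)).trans_isLittleO (isLittleO_sqrt_id_atTop.comp_tendsto hg)

theorem isLittleO_sqrt_affine_id_atTop (a b : ℝ) :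
    (fun x : ℝ ↦ √(a * x + b)) =o[atTop] (id : ℝ → ℝ) :=
  isLittleO_sqrt_of_isBigO
    (((isBigO_refl id atTop).const_mul_left a).add (isLittleO_const_id_atTop b).isBigO) tendsto_id

theorem eventually_mul_sqrt_affine_add_lt (a b c d k : ℝ) {s : ℝ} (hs : 0 < s) :
    ∀ᶠ x in atTop, k * (√(a * x + b) + c) < s * (x - d) := by
  have hlittle : (fun x : ℝ ↦ k * (√(a * x + b) + c) + s * d) =o[atTop] (id : ℝ → ℝ) :=
    (((isLittleO_sqrt_affine_id_atTop a b).add (isLittleO_const_id_atTop c)).const_mul_left k).add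
      (isLittleO_const_id_atTop (s * d))
  filter_upwards [eventually_lt_const_mul_of_isLittleO hlittle (eventually_gt_atTop 0) hs]
    with x hx
  rw [mul_sub]
  exact lt_sub_iff_add_lt.2 hx

theorem sqrt_affine_add_pos {a b c x : ℝ} (ha : 0 ≤ a) (hx : 0 ≤ x) (hc : -√b < c) :
    0 < √(a * x + b) + c :=
  calc 0 < √b + c := neg_lt_iff_pos_add'.1 hc
    _ ≤ √(a * x + b) + c := by gcongr; exact le_add_of_nonneg_left (mul_nonneg ha hx)

/-- The expected drift of Adam per unit learning rate in the counterexample with parameters `δ`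
and `C`. The probability `p = (1 + δ) / (C + 1)` of drawing the steep component `C * w ^ 2 / 2` is
written out. -/
noncomputable def adamDrift (β₂ ε δ C : ℝ) : ℝ :=
  -((1 + δ) / (C + 1)) / √(1 - β₂) +
    (1 - (1 + δ) / (C + 1)) / (√(β₂ * (1 + δ) * C + (1 - β₂)) + ε)

theorem adamDrift_pos_iff {β₂ ε δ C : ℝ} (hβ₂ : β₂ < 1) (hC : -1 < C)
    (hD : 0 < √(β₂ * (1 + δ) * C + (1 - β₂)) + ε) :
    0 < adamDrift β₂ ε δ C ↔
      (1 + δ) * (√(β₂ * (1 + δ) * C + (1 - β₂)) + ε) < √(1 - β₂) * (C - δ) := by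
  have hs : 0 < √(1 - β₂) := Real.sqrt_pos.2 (sub_pos.2 hβ₂)
  have hC' : 0 < C + 1 := neg_lt_iff_pos_add.1 hC
  unfold adamDrift
  set D := √(β₂ * (1 + δ) * C + (1 - β₂)) + ε
  have hcommon : -((1 + δ) / (C + 1)) / √(1 - β₂) + (1 - (1 + δ) / (C + 1)) / D =
      (√(1 - β₂) * (C - δ) - (1 + δ) * D) / ((C + 1) * √(1 - β₂) * D) := by
    field_simp
    ring
  rw [hcommon, div_pos_iff_of_pos_right (by positivity), sub_pos]

theorem adam_drift_nonneg_for_large_C_general {β₂ ε δ : ℝ} (hβ₂ : β₂ < 1)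
    (hβ₂δ : 0 ≤ β₂ * (1 + δ)) (hε : -√(1 - β₂) < ε) :
    ∃ C₀ : ℝ, 1 + δ < C₀ ∧ ∀ C, C₀ ≤ C → 0 < adamDrift β₂ ε δ C := by
  have hs : 0 < √(1 - β₂) := Real.sqrt_pos.2 (sub_pos.2 hβ₂)
  have hpos : ∀ᶠ C in atTop, 0 < adamDrift β₂ ε δ C := by
    filter_upwards [eventually_ge_atTop 0,
      eventually_mul_sqrt_affine_add_lt (β₂ * (1 + δ)) (1 - β₂) ε δ (1 + δ) hs] with C hC hlt
    exact (adamDrift_pos_iff hβ₂ (by linarith) (sqrt_affine_add_pos hβ₂δ hC hε)).2 hlt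
  exact ((eventually_gt_atTop (1 + δ)).and (eventually_forall_ge_atTop.2 hpos)).exists

/-- Final step in the proof of the paper's Theorem 1: for every
`β₂ ∈ [0,1)`, `ε ≥ 0`, `δ ≥ 0`, there exists `C₀ > 1 + δ` such that for all
`C ≥ C₀`, with `p = (1+δ)/(C+1)`,
`−p/√(1−β₂) + (1−p)/(√(β₂·(1+δ)·C + (1−β₂)) + ε) ≥ 0`. -/
theorem adam_drift_nonneg_for_large_C
    (β₂ ε δ : ℝ) (hβ₂ : β₂ ∈ Set.Ico (0 : ℝ) 1) (hε : 0 ≤ ε) (hδ : 0 ≤ δ) :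
    ∃ C₀ : ℝ, 1 + δ < C₀ ∧ ∀ C, C₀ ≤ C →
      0 ≤ -((1 + δ) / (C + 1)) / Real.sqrt (1 - β₂) +
          (1 - (1 + δ) / (C + 1)) /
            (Real.sqrt (β₂ * (1 + δ) * C + (1 - β₂)) + ε) := by
  obtain ⟨C₀, hC₀, hpos⟩ := adam_drift_nonneg_for_large_C_general hβ₂.2
    (mul_nonneg hβ₂.1 (add_nonneg zero_le_one hδ))
    ((neg_lt_zero.2 (Real.sqrt_pos.2 (sub_pos.2 hβ₂.2))).trans_le hε)
  exact ⟨C₀, hC₀, fun C hC ↦ (hpos C hC).le⟩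
end
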